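/- arXiv:2507.20946 — 2 statements merged into one kernel-verified Lean document; each statement's English description precedes it below -/
import Mathlib

section
/- Let ξ = e^{2πi/3} and A = diag(ξ, ξ², 1) ∈ GL₃(ℂ). The centralizer in PGL₃(ℂ) of [A] is the union of: the images of invertible diagonal matrices, the images of invertible matrices supported on positions (1,2),(2,3),(3,1), and the images of invertible matrices supported on positions (1,3),(2,1),(3,2). The component group of this centralizer (quotient by the identity component, which is the image of the diagonal matrices) is cyclic of order 3. -/
open Matrix

/-- A finite partition of a space into closed connected subsets indexes its connected
components. -/
theorem nonempty_connectedComponents_equiv_of_isClosed_of_isConnected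
    {X ι : Type*} [TopologicalSpace X] [Finite ι] (D : ι → Set X)
    (closed : ∀ i, IsClosed (D i)) (connected : ∀ i, IsConnected (D i))
    (eq_of_mem : ∀ i j x, x ∈ D i → x ∈ D j → i = j) (cover : ∀ x, ∃ i, x ∈ D i) :
    Nonempty (ConnectedComponents X ≃ ι) := by
  let _ : TopologicalSpace ι := ⊥
  have : DiscreteTopology ι := ⟨rfl⟩
  choose f hf using cover
  have preimage_f (s : Set ι) : f ⁻¹' s = ⋃ i ∈ s, D i := by
    ext x
    simp only [Set.mem_preimage, Set.mem_iUnion, exists_prop]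
    exact ⟨fun h ↦ ⟨f x, h, hf x⟩, fun ⟨i, hi, hx⟩ ↦ eq_of_mem i _ x hx (hf x) ▸ hi⟩
  have f_continuous : Continuous f := by
    refine continuous_iff_isClosed.2 fun s _ ↦ ?_
    rw [preimage_f]
    exact s.toFinite.isClosed_biUnion fun i _ ↦ closed i
  refine ⟨Equiv.ofBijective f_continuous.connectedComponentsLift ⟨fun a b hab ↦ ?_, fun i ↦ ?_⟩⟩
  · obtain ⟨x, rfl⟩ := ConnectedComponents.surjective_coe a
    obtain ⟨y, rfl⟩ := ConnectedComponents.surjective_coe b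
    have hxy : f x = f y := hab
    exact ConnectedComponents.coe_eq_coe'.2
      ((connected (f y)).isPreconnected.subset_connectedComponent (hf y) (hxy ▸ hf x))
  · obtain ⟨x, hx⟩ := (connected i).nonempty
    exact ⟨x, eq_of_mem _ _ x (hf x) hx⟩

namespace Matrix.GeneralLinearGroup

/-- The invertible `3 × 3` matrices supported on the positions `(i, i + k)`. -/
def cyclicDiagonal (k : Fin 3) : Set (GL (Fin 3) ℂ) :=
  {X | ∀ i j, j ≠ i + k → X.val i j = 0}

theorem mk_center_eq_mk_iff {n R : Type*} [Fintype n] [DecidableEq n] [CommRing R] {X Y : GL n R} :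
    (QuotientGroup.mk' (Subgroup.center (GL n R)) X =
      QuotientGroup.mk' (Subgroup.center (GL n R)) Y) ↔ ∃ c : R, Y.val = c • X.val := by
  rw [QuotientGroup.mk'_apply, QuotientGroup.mk'_apply, QuotientGroup.eq,
    mem_center_iff_val_mem_range_scalar]
  refine exists_congr fun c ↦ ⟨fun h ↦ ?_, fun h ↦ ?_⟩
  · calc Y.val = X.val * (X⁻¹ * Y).val := by simp [← mul_assoc]
      _ = c • X.val := by rw [← h, scalar_apply, ← smul_one_eq_diagonal, Matrix.mul_smul, mul_one]
  · rw [Units.val_mul, h, Matrix.mul_smul, ← Units.val_mul, inv_mul_cancel, scalar_apply,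
      ← smul_one_eq_diagonal, Units.val_one]

theorem exists_apply_ne_zero {n R : Type*} [Fintype n] [DecidableEq n] [CommRing R] [Nontrivial R]
    (X : GL n R) (i : n) : ∃ j, X.val i j ≠ 0 := by
  by_contra! h
  exact ((isUnit_iff_isUnit_det _).1 X.isUnit).ne_zero (det_eq_zero_of_row_eq_zero i h)

theorem mem_cyclicDiagonal_of_mk_eq {k : Fin 3} {X Y : GL (Fin 3) ℂ} (hX : X ∈ cyclicDiagonal k)
    (h : QuotientGroup.mk' (Subgroup.center (GL (Fin 3) ℂ)) X =
      QuotientGroup.mk' (Subgroup.center (GL (Fin 3) ℂ)) Y) : Y ∈ cyclicDiagonal k := by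
  obtain ⟨c, hc⟩ := mk_center_eq_mk_iff.1 h
  intro i j hij
  rw [hc, smul_apply, hX i j hij, smul_zero]

theorem eq_of_mem_cyclicDiagonal {k l : Fin 3} {X : GL (Fin 3) ℂ} (hk : X ∈ cyclicDiagonal k)
    (hl : X ∈ cyclicDiagonal l) : k = l := by
  obtain ⟨j, hj⟩ := X.exists_apply_ne_zero 0
  have hjk := not_imp_comm.1 (hk 0 j) hj
  have hjl := not_imp_comm.1 (hl 0 j) hj
  exact add_left_cancel (hjk.symm.trans hjl)

theorem isClosed_cyclicDiagonal (k : Fin 3) : IsClosed (cyclicDiagonal k) := by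
  simp only [cyclicDiagonal, Set.ofPred_forall]
  refine isClosed_iInter fun i ↦ isClosed_iInter fun j ↦ isClosed_iInter fun _ ↦ ?_
  exact isClosed_eq (Units.continuous_val.matrix_elem i j) continuous_const

theorem isClosed_mk_image_cyclicDiagonal (k : Fin 3) :
    IsClosed (QuotientGroup.mk' (Subgroup.center (GL (Fin 3) ℂ)) '' cyclicDiagonal k) := by
  refine (QuotientGroup.isQuotientMap_mk (N := Subgroup.center (GL (Fin 3) ℂ))).isClosed_preimage.1
    ?_
  convert isClosed_cyclicDiagonal k using 1
  ext X
  exact ⟨fun ⟨Y, hY, h⟩ ↦ mem_cyclicDiagonal_of_mk_eq hY h, fun h ↦ ⟨X, h, rfl⟩⟩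

/-- The invertible matrix with entry `u i` at position `(i, i + k)`. -/
def ofCyclicDiagonal (k : Fin 3) (u : Fin 3 → ℂˣ) : GL (Fin 3) ℂ where
  val := of fun i j ↦ if j = i + k then (u i : ℂ) else 0
  inv := of fun i j ↦ if i = j + k then ((u j)⁻¹ : ℂˣ) else 0
  val_inv := by
    ext i j
    simp only [mul_apply, of_apply, ite_mul, zero_mul, Finset.sum_ite_eq', Finset.mem_univ, if_true,
      add_left_inj, one_apply]
    split_ifs with h <;> simp [h]
  inv_val := by
    ext i j
    have h : ∀ x, i = x + k ↔ x = i - k := fun x ↦ eq_comm.trans eq_sub_iff_add_eq.symm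
    simp only [mul_apply, of_apply, ite_mul, zero_mul, h, Finset.sum_ite_eq', Finset.mem_univ,
      if_true, sub_add_cancel, one_apply, eq_comm (a := j)]
    split_ifs <;> simp

theorem continuous_ofCyclicDiagonal (k : Fin 3) : Continuous (ofCyclicDiagonal k) := by
  refine Units.continuous_iff.2 ⟨continuous_matrix fun i j ↦ ?_, continuous_matrix fun i j ↦ ?_⟩
  · simp only [Function.comp_apply, ofCyclicDiagonal, of_apply]
    split_ifs
    · exact Units.continuous_val.comp (_root_.continuous_apply i)
    · exact continuous_const
  · change Continuous fun u : Fin 3 → ℂˣ ↦ if i = j + k then (((u j)⁻¹ : ℂˣ) : ℂ) else 0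
    split_ifs
    · exact Units.continuous_val.comp (_root_.continuous_apply j).inv
    · exact continuous_const

theorem range_ofCyclicDiagonal (k : Fin 3) : Set.range (ofCyclicDiagonal k) = cyclicDiagonal k := by
  ext X
  refine ⟨?_, fun hX ↦ ?_⟩
  · rintro ⟨u, rfl⟩ i j hij
    simp [ofCyclicDiagonal, hij]
  · have apply_ne_zero (i : Fin 3) : X.val i (i + k) ≠ 0 := by
      obtain ⟨j, hj⟩ := X.exists_apply_ne_zero i
      rwa [← not_imp_comm.1 (hX i j) hj]
    refine ⟨fun i ↦ Units.mk0 _ (apply_ne_zero i), Units.ext ?_⟩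
    ext i j
    by_cases h : j = i + k
    · simp [ofCyclicDiagonal, h]
    · simp [ofCyclicDiagonal, h, hX i j h]

theorem isConnected_cyclicDiagonal (k : Fin 3) : IsConnected (cyclicDiagonal k) :=
  range_ofCyclicDiagonal k ▸ isConnected_range (continuous_ofCyclicDiagonal k)

theorem isConnected_mk_image_cyclicDiagonal (k : Fin 3) :
    IsConnected (QuotientGroup.mk' (Subgroup.center (GL (Fin 3) ℂ)) '' cyclicDiagonal k) :=
  (isConnected_cyclicDiagonal k).image _ QuotientGroup.continuous_mk.continuousOn

theorem mk_mem_centralizer_mk_iff {n R : Type*} [Fintype n] [DecidableEq n] [CommRing R]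
    {A X : GL n R} {a : n → R} (hA : A.val = diagonal a) :
    QuotientGroup.mk' (Subgroup.center (GL n R)) X ∈
        Subgroup.centralizer {QuotientGroup.mk' (Subgroup.center (GL n R)) A} ↔
      ∃ c : R, ∀ i j, X.val i j * a j = c * (a i * X.val i j) := by
  rw [Subgroup.mem_centralizer_singleton_iff, ← map_mul, ← map_mul, eq_comm, mk_center_eq_mk_iff]
  simp [← Matrix.ext_iff, hA]

theorem mk_mem_centralizer_iff_exists_cyclicDiagonal {ξ : ℂ} (hξ : IsPrimitiveRoot ξ 3)
    {A : GL (Fin 3) ℂ} (hA : A.val = diagonal ![ξ, ξ ^ 2, 1]) (X : GL (Fin 3) ℂ) :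
    QuotientGroup.mk' (Subgroup.center (GL (Fin 3) ℂ)) X ∈
        Subgroup.centralizer {QuotientGroup.mk' (Subgroup.center (GL (Fin 3) ℂ)) A} ↔
      ∃ k, X ∈ cyclicDiagonal k := by
  have ξ_ne_zero : ξ ≠ 0 := hξ.ne_zero (by norm_num)
  have ξ_ne_one : ξ ≠ 1 := hξ.ne_one (by norm_num)
  have ξ_pow_three : ξ ^ 3 = 1 := hξ.pow_eq_one
  have ξ_sq_ne_one : ξ ^ 2 ≠ 1 := hξ.pow_ne_one_of_pos_of_lt (by norm_num) (by norm_num)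
  have entry (k i : Fin 3) :
      (![ξ, ξ ^ 2, 1] : Fin 3 → ℂ) (i + k) = ξ ^ k.val * (![ξ, ξ ^ 2, 1] : Fin 3 → ℂ) i := by
    fin_cases k <;> fin_cases i <;> simp <;> grind
  have entry_injective : Function.Injective (![ξ, ξ ^ 2, 1] : Fin 3 → ℂ) := by
    intro i j
    fin_cases i <;> fin_cases j <;> simp <;> grind
  rw [mk_mem_centralizer_mk_iff hA]
  constructor
  · rintro ⟨c, hc⟩
    obtain ⟨k, hk⟩ := X.exists_apply_ne_zero 0
    have apply_eq {i j : Fin 3} (h : X.val i j ≠ 0) :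
        (![ξ, ξ ^ 2, 1] : Fin 3 → ℂ) j = c * (![ξ, ξ ^ 2, 1] : Fin 3 → ℂ) i :=
      mul_left_cancel₀ h ((hc i j).trans (by ring))
    have c_eq : c = ξ ^ k.val := by
      have h := (apply_eq hk).symm.trans (zero_add k ▸ entry k 0)
      exact mul_right_cancel₀ ξ_ne_zero h
    refine ⟨k, fun i j hij ↦ ?_⟩
    by_contra h
    exact hij (entry_injective ((apply_eq h).trans (c_eq ▸ (entry k i).symm)))
  · rintro ⟨k, hk⟩
    refine ⟨ξ ^ k.val, fun i j ↦ ?_⟩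
    by_cases h : j = i + k
    · rw [h, entry]
      ring
    · simp [hk i j h]

end Matrix.GeneralLinearGroup

open Matrix.GeneralLinearGroup

/-- With `ξ = e^{2πi/3}` and `A = diag(ξ, ξ², 1)`, the centralizer of `[A]`
in `PGL₃(ℂ)` is the union of the images of the invertible diagonal matrices, of the
invertible matrices supported on positions `(1,2),(2,3),(3,1)`, and of the invertible
matrices supported on positions `(1,3),(2,1),(3,2)`; its component group is cyclic of
order `3`. -/
theorem stmt6 (ξ : ℂ) (hξ : ξ = Complex.exp (2 * Real.pi * Complex.I / 3))
    (A : GL (Fin 3) ℂ)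
    (hA : (A : Matrix (Fin 3) (Fin 3) ℂ) = Matrix.diagonal ![ξ, ξ ^ 2, 1]) :
    (Subgroup.centralizer {QuotientGroup.mk' (Subgroup.center (GL (Fin 3) ℂ)) A} :
        Set ((GL (Fin 3) ℂ) ⧸ Subgroup.center (GL (Fin 3) ℂ))) =
      (QuotientGroup.mk' (Subgroup.center (GL (Fin 3) ℂ))) ''
        {X : GL (Fin 3) ℂ | ∀ i j, i ≠ j → (X : Matrix (Fin 3) (Fin 3) ℂ) i j = 0} ∪
      (QuotientGroup.mk' (Subgroup.center (GL (Fin 3) ℂ))) ''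
        {X : GL (Fin 3) ℂ | ∀ i j, ¬ ((i, j) ∈ ({(0, 1), (1, 2), (2, 0)} :
            Set (Fin 3 × Fin 3))) → (X : Matrix (Fin 3) (Fin 3) ℂ) i j = 0} ∪
      (QuotientGroup.mk' (Subgroup.center (GL (Fin 3) ℂ))) ''
        {X : GL (Fin 3) ℂ | ∀ i j, ¬ ((i, j) ∈ ({(0, 2), (1, 0), (2, 1)} :
            Set (Fin 3 × Fin 3))) → (X : Matrix (Fin 3) (Fin 3) ℂ) i j = 0} ∧
    Nonempty (ConnectedComponents
      (Subgroup.centralizer {QuotientGroup.mk' (Subgroup.center (GL (Fin 3) ℂ)) A} :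
        Subgroup ((GL (Fin 3) ℂ) ⧸ Subgroup.center (GL (Fin 3) ℂ))) ≃ ZMod 3) := by
  have primitive : IsPrimitiveRoot ξ 3 := by
    have h := Complex.isPrimitiveRoot_exp 3 (by norm_num)
    rwa [Nat.cast_ofNat, ← hξ] at h
  have mem_centralizer := mk_mem_centralizer_iff_exists_cyclicDiagonal primitive hA
  constructor
  · have diagonal_eq : {X : GL (Fin 3) ℂ | ∀ i j, i ≠ j → X.val i j = 0} = cyclicDiagonal 0 := by
      simp [cyclicDiagonal, ne_comm]
    have superdiagonal_eq : {X : GL (Fin 3) ℂ | ∀ i j, ¬ ((i, j) ∈ ({(0, 1), (1, 2), (2, 0)} :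
        Set (Fin 3 × Fin 3))) → X.val i j = 0} = cyclicDiagonal 1 := by
      ext X
      simp [cyclicDiagonal, Fin.forall_fin_succ]
    have subdiagonal_eq : {X : GL (Fin 3) ℂ | ∀ i j, ¬ ((i, j) ∈ ({(0, 2), (1, 0), (2, 1)} :
        Set (Fin 3 × Fin 3))) → X.val i j = 0} = cyclicDiagonal 2 := by
      ext X
      simp [cyclicDiagonal, Fin.forall_fin_succ]
    rw [diagonal_eq, superdiagonal_eq, subdiagonal_eq, ← Set.image_union, ← Set.image_union]
    ext x
    obtain ⟨X, rfl⟩ := QuotientGroup.mk'_surjective _ x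
    rw [SetLike.mem_coe, mem_centralizer]
    constructor
    · rintro ⟨k, hk⟩
      refine ⟨X, ?_, rfl⟩
      fin_cases k
      exacts [.inl (.inl hk), .inl (.inr hk), .inr hk]
    · rintro ⟨Y, (hY | hY) | hY, h⟩
      exacts [⟨0, mem_cyclicDiagonal_of_mk_eq hY h⟩, ⟨1, mem_cyclicDiagonal_of_mk_eq hY h⟩,
        ⟨2, mem_cyclicDiagonal_of_mk_eq hY h⟩]
  · refine nonempty_connectedComponents_equiv_of_isClosed_of_isConnected (ι := Fin 3)
      (fun k ↦ Subtype.val ⁻¹'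
        (QuotientGroup.mk' (Subgroup.center (GL (Fin 3) ℂ)) '' cyclicDiagonal k))
      (fun k ↦ (isClosed_mk_image_cyclicDiagonal k).preimage continuous_subtype_val)
      (fun k ↦ ?_) ?_ ?_
    · have h := isConnected_mk_image_cyclicDiagonal k
      refine ⟨?_, ?_⟩
      · obtain ⟨_, X, hX, rfl⟩ := h.nonempty
        exact ⟨⟨_, (mem_centralizer X).2 ⟨k, hX⟩⟩, X, hX, rfl⟩
      · refine Topology.IsInducing.subtypeVal.isPreconnected_image.1 ?_
        convert h.isPreconnected using 1
        refine Set.image_preimage_eq_of_subset ?_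
        rintro _ ⟨X, hX, rfl⟩
        exact ⟨⟨_, (mem_centralizer X).2 ⟨k, hX⟩⟩, rfl⟩
    · rintro k l _ ⟨X, hX, hXx⟩ ⟨Y, hY, hYx⟩
      exact eq_of_mem_cyclicDiagonal (mem_cyclicDiagonal_of_mk_eq hX (hXx.trans hYx.symm)) hY
    · rintro ⟨x, hx⟩
      obtain ⟨X, rfl⟩ := QuotientGroup.mk'_surjective _ x
      obtain ⟨k, hk⟩ := (mem_centralizer X).1 hx
      exact ⟨k, X, hk, rfl⟩
end

section
/- Fix a ∈ ℂˣ, a primitive cube root of unity ξ, and c ∈ ℂˣ. There is no X ∈ GL₃(ℂ) satisfying X·A = ξ·A·X where A = [[0,1,0],[a,0,0],[0,0,c]]. -/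
open Matrix

/-- For `a, c ∈ ℂˣ` and a primitive cube root of unity `ξ`, no invertible
`X` satisfies `X·A = ξ·A·X` where `A = [[0,1,0],[a,0,0],[0,0,c]]`. -/
theorem stmt11 (a c : ℂ) (ha : a ≠ 0) (hc : c ≠ 0)
    (ξ : ℂ) (hξ : ξ ^ 3 = 1) (hξ1 : ξ ≠ 1) :
    ¬ ∃ X : Matrix (Fin 3) (Fin 3) ℂ, IsUnit X.det ∧
      X * !![0, 1, 0; a, 0, 0; 0, 0, c] = ξ • (!![0, 1, 0; a, 0, 0; 0, 0, c] * X) := by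
  rintro ⟨X, hX, h⟩
  have htr := congrArg (fun M => trace (X⁻¹ * M)) h
  simp only [Matrix.mul_smul, trace_smul, nonsing_inv_mul_cancel_left _ _ hX] at htr
  rw [← Matrix.mul_assoc, trace_mul_comm, mul_nonsing_inv_cancel_left _ _ hX] at htr
  simp [trace_fin_three] at htr
  exact hξ1 (mul_right_cancel₀ hc (by rw [one_mul]; exact htr.symm))
end
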